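/- Operational soundness: if ⟨Σ; (G₁,…,Gₖ); ∇⟩ →* ⟨Σ′; (); ∇′⟩ (finitely many operational transitions ending with the empty goal list), then there exist constraints C₁,…,Cₖ such that Σ;Δ ⟶ Gᵢ ↘ Cᵢ is derivable for each i = 1,…,k, and every ground substitution θ:Σ′ with ⊨ θ(E) for all E ∈ ∇′ also satisfies ⊨ θ(E) for all E ∈ ∇ ∪ {C₁,…,Cₖ}. -/

import Mathlib

/-!
Operational soundness holds because each single transition can be undone: residual constraints
`Cs` for the goals of the target state, valid under every solution of the final state, are turned
into such constraints for the source state (`OStep.sound`), and the theorem follows by induction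
on the length of the run, starting from its end. The invariant `Sound` also records that a
solution of the final context satisfies the context of every earlier state, which holds since
transitions only add bindings.

Residuated derivations never inspect their context (`RG.change_ctx`), so the bindings added by an
`∃` or `И` step can be dropped from the derivations for the other goals. What remains is to pass
from `⊨ θ(C)` to `⊨ θ(∃X:σ.C)` and `⊨ θ(Иa.C)`.

* For `И`, satisfaction is equivariant (`ConSat.swap`), so `⊨ θ(C)` yields the instance at any
  name `b` of the sort of `a`; freshness of `a` for `θ` plays no role.
* For `∃`, the witness is `θ X`, which is well sorted by `θ : Σ'`. Since `θ` is a total map, it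
  may send undeclared variables to terms that contain `X`, and these occurrences become
  instantiated as well. This is harmless: variables make no atomic constraint true, so
  satisfaction is preserved by instantiating free variables with ground terms
  (`ConSat.subst_single`).
-/

/-!  Nominal logic programming: common infrastructure. -/

noncomputable section
open scoped Classical
set_option linter.unusedVariables false
set_option linter.unreachableTactic false
set_option linter.unusedTactic false

/-- Sorts of a nominal signature: name sorts `ν`, data sorts `δ`,
and abstraction sorts `⟨ν⟩σ`. -/
inductive NomSort (N D : Type) : Type
  | name : N → NomSort N D
  | data : D → NomSort N D
  | nabs : N → NomSort N D → NomSort N D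

/-- A nominal (many-sorted, first-order) signature. -/
structure NomSig : Type 1 where
  NSort : Type
  DSort : Type
  Func : Type
  Rel : Type
  fArgs : Func → List (NomSort NSort DSort)
  fRes : Func → DSort
  rArgs : Rel → List (NomSort NSort DSort)

/-- Names: countably infinitely many for each name sort. -/
abbrev NomSig.Name (L : NomSig) : Type := L.NSort × ℕ

variable {L : NomSig}

/-- The transposition (a b) acting on names. -/
def swapName (a b c : L.Name) : L.Name :=
  if c = a then b else if c = b then a else c

/-- Nominal terms (possibly containing variables). -/
inductive Tm (L : NomSig) : Type
  | var : ℕ → Tm L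
  | name : L.Name → Tm L
  | app : L.Func → List (Tm L) → Tm L
  | abs : L.Name → Tm L → Tm L

namespace Tm

/-- Apply a renaming of names to every name occurrence (including binding ones). -/
def rename (f : L.Name → L.Name) : Tm L → Tm L
  | var X => var X
  | name c => name (f c)
  | app g ts => app g (ts.attach.map fun x => rename f x.1)
  | abs c t => abs (f c) (rename f t)
decreasing_by
  all_goals simp_wf
  all_goals first
    | (have := List.sizeOf_lt_of_mem x.2; omega)
    | omega

/-- The swapping `(a b)·t`. -/
def swap (a b : L.Name) (t : Tm L) : Tm L := t.rename (swapName a b)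

/-- Apply a substitution of terms for variables. -/
def subst (θ : ℕ → Tm L) : Tm L → Tm L
  | var X => θ X
  | name c => name c
  | app g ts => app g (ts.attach.map fun x => subst θ x.1)
  | abs c t => abs c (subst θ t)
decreasing_by
  all_goals simp_wf
  all_goals first
    | (have := List.sizeOf_lt_of_mem x.2; omega)
    | omega

/-- Syntactic free-name occurrence (a name occurring outside the scope of
an abstraction of the same name). -/
inductive FNa : L.Name → Tm L → Prop
  | name (a : L.Name) : FNa a (name a)
  | app (a : L.Name) (f : L.Func) (ts : List (Tm L)) (t : Tm L) :
      t ∈ ts → FNa a t → FNa a (app f ts)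
  | abs (a b : L.Name) (t : Tm L) : a ≠ b → FNa a t → FNa a (abs b t)

/-- Free variable occurrence in a term. -/
inductive FVa : ℕ → Tm L → Prop
  | var (X : ℕ) : FVa X (var X)
  | app (X : ℕ) (f : L.Func) (ts : List (Tm L)) (t : Tm L) :
      t ∈ ts → FVa X t → FVa X (app f ts)
  | abs (X : ℕ) (b : L.Name) (t : Tm L) : FVa X t → FVa X (abs b t)

end Tm

/-- The substitution `[t/X]`. -/
def substSingle (X : ℕ) (t : Tm L) : ℕ → Tm L := fun Y => if Y = X then t else Tm.var Y

/-- `IsTm t σ`: `t` is a well-sorted ground term of sort `σ`. -/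
inductive IsTm : Tm L → NomSort L.NSort L.DSort → Prop
  | name (a : L.Name) : IsTm (Tm.name a) (NomSort.name a.1)
  | app (f : L.Func) (ts : List (Tm L)) :
      ts.length = (L.fArgs f).length →
      (∀ p ∈ ts.zip (L.fArgs f), IsTm p.1 p.2) →
      IsTm (Tm.app f ts) (NomSort.data (L.fRes f))
  | abs (a : L.Name) (t : Tm L) (σ : NomSort L.NSort L.DSort) :
      IsTm t σ → IsTm (Tm.abs a t) (NomSort.nabs a.1 σ)

/-- Well-sortedness of a (possibly open) term relative to a sort
assignment `vs` for variables. -/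
inductive TmS (vs : ℕ → NomSort L.NSort L.DSort) : Tm L → NomSort L.NSort L.DSort → Prop
  | var (X : ℕ) : TmS vs (Tm.var X) (vs X)
  | name (a : L.Name) : TmS vs (Tm.name a) (NomSort.name a.1)
  | app (f : L.Func) (ts : List (Tm L)) :
      ts.length = (L.fArgs f).length →
      (∀ p ∈ ts.zip (L.fArgs f), TmS vs p.1 p.2) →
      TmS vs (Tm.app f ts) (NomSort.data (L.fRes f))
  | abs (a : L.Name) (t : Tm L) (σ : NomSort L.NSort L.DSort) :
      TmS vs t σ → TmS vs (Tm.abs a t) (NomSort.nabs a.1 σ)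

/-- Freshness `a # t` on ground terms. -/
inductive Fresh : L.Name → Tm L → Prop
  | name (a b : L.Name) : a ≠ b → Fresh a (Tm.name b)
  | app (a : L.Name) (f : L.Func) (ts : List (Tm L)) :
      (∀ t ∈ ts, Fresh a t) → Fresh a (Tm.app f ts)
  | absSame (a : L.Name) (t : Tm L) : Fresh a (Tm.abs a t)
  | absDiff (a b : L.Name) (t : Tm L) : a ≠ b → Fresh a t → Fresh a (Tm.abs b t)

/-- Alpha-equivalence `t ≈ u` on ground terms. -/
inductive Aeq : Tm L → Tm L → Prop
  | name (a : L.Name) : Aeq (Tm.name a) (Tm.name a)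
  | app (f : L.Func) (ts us : List (Tm L)) :
      ts.length = us.length → (∀ p ∈ ts.zip us, Aeq p.1 p.2) →
      Aeq (Tm.app f ts) (Tm.app f us)
  | absSame (a : L.Name) (t u : Tm L) : Aeq t u → Aeq (Tm.abs a t) (Tm.abs a u)
  | absDiff (a b : L.Name) (t u : Tm L) :
      Fresh a u → Aeq t (Tm.swap a b u) → Aeq (Tm.abs a t) (Tm.abs b u)

/-- The support of a ground term: the set of names not fresh for it. -/
def suppTm (t : Tm L) : Set L.Name := {a | ¬ Fresh a t}

/-- Finite sort-preserving bijections (permutations) of names. -/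
def IsPerm (π : L.Name → L.Name) : Prop :=
  Function.Bijective π ∧ (∀ a, (π a).1 = a.1) ∧ {a | π a ≠ a}.Finite

/-- `t ∼ u`: equal up to a permutation of names. -/
def SimTm (t u : Tm L) : Prop := ∃ π, IsPerm π ∧ Aeq (t.rename π) u

/-- Atomic formulas `p(t₁,…,tₙ)`. -/
structure NAtom (L : NomSig) : Type where
  rel : L.Rel
  args : List (Tm L)

def NAtom.rename (f : L.Name → L.Name) (A : NAtom L) : NAtom L :=
  ⟨A.rel, A.args.map (Tm.rename f)⟩

def NAtom.swap (a b : L.Name) (A : NAtom L) : NAtom L := A.rename (swapName a b)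

def NAtom.subst (θ : ℕ → Tm L) (A : NAtom L) : NAtom L :=
  ⟨A.rel, A.args.map (Tm.subst θ)⟩

def NAtom.FNa (a : L.Name) (A : NAtom L) : Prop := ∃ t ∈ A.args, Tm.FNa a t
def NAtom.FVa (X : ℕ) (A : NAtom L) : Prop := ∃ t ∈ A.args, Tm.FVa X t

/-- Alpha-equivalence of atoms. -/
def AtomAeq (A B : NAtom L) : Prop :=
  A.rel = B.rel ∧ A.args.length = B.args.length ∧ ∀ p ∈ A.args.zip B.args, Aeq p.1 p.2

/-- `A ∼ B` for atoms: equal up to a permutation of names. -/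
def AtomSim (A B : NAtom L) : Prop := ∃ π, IsPerm π ∧ AtomAeq (A.rename π) B

/-- Well-sortedness of an atom relative to a variable sort assignment. -/
def AtomS (vs : ℕ → NomSort L.NSort L.DSort) (A : NAtom L) : Prop :=
  A.args.length = (L.rArgs A.rel).length ∧ ∀ p ∈ A.args.zip (L.rArgs A.rel), TmS vs p.1 p.2

/-- The Herbrand base: all well-sorted ground atoms. -/
def BL (L : NomSig) : Set (NAtom L) :=
  {A | A.args.length = (L.rArgs A.rel).length ∧ ∀ p ∈ A.args.zip (L.rArgs A.rel), IsTm p.1 p.2}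

/-- An equivariant set of atoms: closed under all same-sorted swappings. -/
def EquivariantSet (S : Set (NAtom L)) : Prop :=
  ∀ a b : L.Name, a.1 = b.1 → NAtom.swap a b '' S = S


/-! ### Constraints -/

/-- Constraints `C`. -/
inductive NCon (L : NomSig) : Type
  | tt : NCon L
  | eq (t u : Tm L) : NCon L
  | fr (a : L.Name) (t : Tm L) : NCon L
  | sim (t u : Tm L) : NCon L
  | simA (A B : NAtom L) : NCon L
  | aeqA (A B : NAtom L) : NCon L
  | and (C C' : NCon L) : NCon L
  | ex (X : ℕ) (σ : NomSort L.NSort L.DSort) (C : NCon L) : NCon L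
  | nu (a : L.Name) (C : NCon L) : NCon L

namespace NCon

def rename (f : L.Name → L.Name) : NCon L → NCon L
  | tt => tt
  | eq t u => eq (t.rename f) (u.rename f)
  | fr a t => fr (f a) (t.rename f)
  | sim t u => sim (t.rename f) (u.rename f)
  | simA A B => simA (A.rename f) (B.rename f)
  | aeqA A B => aeqA (A.rename f) (B.rename f)
  | and C C' => and (rename f C) (rename f C')
  | ex X σ C => ex X σ (rename f C)
  | nu a C => nu (f a) (rename f C)

/-- Swapping `(a b)·C`, acting on all names (bound names included). -/
def swap (a b : L.Name) (C : NCon L) : NCon L := C.rename (swapName a b)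

def subst (θ : ℕ → Tm L) : NCon L → NCon L
  | tt => tt
  | eq t u => eq (t.subst θ) (u.subst θ)
  | fr a t => fr a (t.subst θ)
  | sim t u => sim (t.subst θ) (u.subst θ)
  | simA A B => simA (A.subst θ) (B.subst θ)
  | aeqA A B => aeqA (A.subst θ) (B.subst θ)
  | and C C' => and (subst θ C) (subst θ C')
  | ex X σ C => ex X σ (subst (Function.update θ X (Tm.var X)) C)
  | nu a C => nu a (subst θ C)

def size : NCon L → ℕ
  | and C C' => size C + size C' + 1
  | ex _ _ C => size C + 1
  | nu _ C => size C + 1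
  | _ => 1

@[simp] theorem size_rename (f : L.Name → L.Name) :
    ∀ C : NCon L, (C.rename f).size = C.size := by
  intro C; induction C <;> simp [rename, size, *]

@[simp] theorem size_swap (a b : L.Name) (C : NCon L) : (C.swap a b).size = C.size :=
  size_rename _ C

@[simp] theorem size_subst :
    ∀ (C : NCon L) (θ : ℕ → Tm L), (C.subst θ).size = C.size := by
  intro C; induction C <;> intro θ <;> simp [subst, size, *]

/-- Free names of a constraint. -/
inductive FNa : L.Name → NCon L → Prop
  | eq₁ (a : L.Name) (t u : Tm L) : Tm.FNa a t → FNa a (eq t u)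
  | eq₂ (a : L.Name) (t u : Tm L) : Tm.FNa a u → FNa a (eq t u)
  | frN (a : L.Name) (t : Tm L) : FNa a (fr a t)
  | frT (a c : L.Name) (t : Tm L) : Tm.FNa a t → FNa a (fr c t)
  | sim₁ (a : L.Name) (t u : Tm L) : Tm.FNa a t → FNa a (sim t u)
  | sim₂ (a : L.Name) (t u : Tm L) : Tm.FNa a u → FNa a (sim t u)
  | simA₁ (a : L.Name) (A B : NAtom L) : NAtom.FNa a A → FNa a (simA A B)
  | simA₂ (a : L.Name) (A B : NAtom L) : NAtom.FNa a B → FNa a (simA A B)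
  | aeqA₁ (a : L.Name) (A B : NAtom L) : NAtom.FNa a A → FNa a (aeqA A B)
  | aeqA₂ (a : L.Name) (A B : NAtom L) : NAtom.FNa a B → FNa a (aeqA A B)
  | and₁ (a : L.Name) (C C' : NCon L) : FNa a C → FNa a (and C C')
  | and₂ (a : L.Name) (C C' : NCon L) : FNa a C' → FNa a (and C C')
  | ex (a : L.Name) (X : ℕ) (σ : NomSort L.NSort L.DSort) (C : NCon L) :
      FNa a C → FNa a (ex X σ C)
  | nu (a c : L.Name) (C : NCon L) : a ≠ c → FNa a C → FNa a (nu c C)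

/-- Free variables of a constraint. -/
inductive FVa : ℕ → NCon L → Prop
  | eq₁ (X : ℕ) (t u : Tm L) : Tm.FVa X t → FVa X (eq t u)
  | eq₂ (X : ℕ) (t u : Tm L) : Tm.FVa X u → FVa X (eq t u)
  | frT (X : ℕ) (c : L.Name) (t : Tm L) : Tm.FVa X t → FVa X (fr c t)
  | sim₁ (X : ℕ) (t u : Tm L) : Tm.FVa X t → FVa X (sim t u)
  | sim₂ (X : ℕ) (t u : Tm L) : Tm.FVa X u → FVa X (sim t u)
  | simA₁ (X : ℕ) (A B : NAtom L) : NAtom.FVa X A → FVa X (simA A B)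
  | simA₂ (X : ℕ) (A B : NAtom L) : NAtom.FVa X B → FVa X (simA A B)
  | aeqA₁ (X : ℕ) (A B : NAtom L) : NAtom.FVa X A → FVa X (aeqA A B)
  | aeqA₂ (X : ℕ) (A B : NAtom L) : NAtom.FVa X B → FVa X (aeqA A B)
  | and₁ (X : ℕ) (C C' : NCon L) : FVa X C → FVa X (and C C')
  | and₂ (X : ℕ) (C C' : NCon L) : FVa X C' → FVa X (and C C')
  | ex (X X' : ℕ) (σ : NomSort L.NSort L.DSort) (C : NCon L) :
      X ≠ X' → FVa X C → FVa X (ex X' σ C)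
  | nu (X : ℕ) (c : L.Name) (C : NCon L) : FVa X C → FVa X (nu c C)

/-- Well-sortedness of a constraint relative to a variable sort assignment. -/
def WS (vs : ℕ → NomSort L.NSort L.DSort) : NCon L → Prop
  | tt => True
  | eq t u => ∃ σ, TmS vs t σ ∧ TmS vs u σ
  | fr _ t => ∃ σ, TmS vs t σ
  | sim t u => ∃ σ, TmS vs t σ ∧ TmS vs u σ
  | simA A B => AtomS vs A ∧ AtomS vs B
  | aeqA A B => AtomS vs A ∧ AtomS vs B
  | and C C' => WS vs C ∧ WS vs C'
  | ex X σ C => WS (Function.update vs X σ) C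
  | nu _ C => WS vs C

end NCon

/-- Satisfaction `⊨ C` of a (closed) constraint. -/
def ConSat : NCon L → Prop
  | NCon.tt => True
  | NCon.eq t u => Aeq t u
  | NCon.fr a t => Fresh a t
  | NCon.sim t u => SimTm t u
  | NCon.simA A B => AtomSim A B
  | NCon.aeqA A B => AtomAeq A B
  | NCon.and C C' => ConSat C ∧ ConSat C'
  | NCon.ex X σ C => ∃ t : Tm L, IsTm t σ ∧ ConSat (C.subst (substSingle X t))
  | NCon.nu a C => ∀ b : L.Name, b.1 = a.1 → ¬ NCon.FNa b (NCon.nu a C) → ConSat (C.swap b a)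
termination_by C => C.size
decreasing_by all_goals (simp [NCon.size]; try omega)
/-! ### Goals -/

/-- Goal formulas `G`. -/
inductive NGoal (L : NomSig) : Type
  | tt : NGoal L
  | atom (A : NAtom L) : NGoal L
  | con (C : NCon L) : NGoal L
  | and (G G' : NGoal L) : NGoal L
  | or (G G' : NGoal L) : NGoal L
  | ex (X : ℕ) (σ : NomSort L.NSort L.DSort) (G : NGoal L) : NGoal L
  | nu (a : L.Name) (G : NGoal L) : NGoal L

namespace NGoal

def rename (f : L.Name → L.Name) : NGoal L → NGoal L
  | tt => tt
  | atom A => atom (A.rename f)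
  | con C => con (C.rename f)
  | and G G' => and (rename f G) (rename f G')
  | or G G' => or (rename f G) (rename f G')
  | ex X σ G => ex X σ (rename f G)
  | nu a G => nu (f a) (rename f G)

def swap (a b : L.Name) (G : NGoal L) : NGoal L := G.rename (swapName a b)

def subst (θ : ℕ → Tm L) : NGoal L → NGoal L
  | tt => tt
  | atom A => atom (A.subst θ)
  | con C => con (C.subst θ)
  | and G G' => and (subst θ G) (subst θ G')
  | or G G' => or (subst θ G) (subst θ G')
  | ex X σ G => ex X σ (subst (Function.update θ X (Tm.var X)) G)
  | nu a G => nu a (subst θ G)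

def size : NGoal L → ℕ
  | and G G' => size G + size G' + 1
  | or G G' => size G + size G' + 1
  | ex _ _ G => size G + 1
  | nu _ G => size G + 1
  | _ => 1

@[simp] theorem size_rename (f : L.Name → L.Name) :
    ∀ G : NGoal L, (G.rename f).size = G.size := by
  intro G; induction G <;> simp [rename, size, *]

@[simp] theorem size_swap (a b : L.Name) (G : NGoal L) : (G.swap a b).size = G.size :=
  size_rename _ G

@[simp] theorem size_subst :
    ∀ (G : NGoal L) (θ : ℕ → Tm L), (G.subst θ).size = G.size := by
  intro G; induction G <;> intro θ <;> simp [subst, size, *]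

/-- Free names of a goal. -/
inductive FNa : L.Name → NGoal L → Prop
  | atom (a : L.Name) (A : NAtom L) : NAtom.FNa a A → FNa a (atom A)
  | con (a : L.Name) (C : NCon L) : NCon.FNa a C → FNa a (con C)
  | and₁ (a : L.Name) (G G' : NGoal L) : FNa a G → FNa a (and G G')
  | and₂ (a : L.Name) (G G' : NGoal L) : FNa a G' → FNa a (and G G')
  | or₁ (a : L.Name) (G G' : NGoal L) : FNa a G → FNa a (or G G')
  | or₂ (a : L.Name) (G G' : NGoal L) : FNa a G' → FNa a (or G G')
  | ex (a : L.Name) (X : ℕ) (σ : NomSort L.NSort L.DSort) (G : NGoal L) :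
      FNa a G → FNa a (ex X σ G)
  | nu (a c : L.Name) (G : NGoal L) : a ≠ c → FNa a G → FNa a (nu c G)

/-- Free variables of a goal. -/
inductive FVa : ℕ → NGoal L → Prop
  | atom (X : ℕ) (A : NAtom L) : NAtom.FVa X A → FVa X (atom A)
  | con (X : ℕ) (C : NCon L) : NCon.FVa X C → FVa X (con C)
  | and₁ (X : ℕ) (G G' : NGoal L) : FVa X G → FVa X (and G G')
  | and₂ (X : ℕ) (G G' : NGoal L) : FVa X G' → FVa X (and G G')
  | or₁ (X : ℕ) (G G' : NGoal L) : FVa X G → FVa X (or G G')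
  | or₂ (X : ℕ) (G G' : NGoal L) : FVa X G' → FVa X (or G G')
  | ex (X X' : ℕ) (σ : NomSort L.NSort L.DSort) (G : NGoal L) :
      X ≠ X' → FVa X G → FVa X (ex X' σ G)
  | nu (X : ℕ) (c : L.Name) (G : NGoal L) : FVa X G → FVa X (nu c G)

/-- Well-sortedness of a goal relative to a variable sort assignment. -/
def WS (vs : ℕ → NomSort L.NSort L.DSort) : NGoal L → Prop
  | tt => True
  | atom A => AtomS vs A
  | con C => NCon.WS vs C
  | and G G' => WS vs G ∧ WS vs G'
  | or G G' => WS vs G ∧ WS vs G'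
  | ex X σ G => WS (Function.update vs X σ) G
  | nu _ G => WS vs G

end NGoal

/-- Satisfaction `S ⊨ G` of a (closed) goal by a Herbrand interpretation. -/
def GoalSat (S : Set (NAtom L)) : NGoal L → Prop
  | NGoal.tt => True
  | NGoal.atom A => A ∈ S
  | NGoal.con C => ConSat C
  | NGoal.and G G' => GoalSat S G ∧ GoalSat S G'
  | NGoal.or G G' => GoalSat S G ∨ GoalSat S G'
  | NGoal.ex X σ G => ∃ t : Tm L, IsTm t σ ∧ GoalSat S (G.subst (substSingle X t))
  | NGoal.nu a G => ∀ b : L.Name, b.1 = a.1 → ¬ NGoal.FNa b (NGoal.nu a G) →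
      GoalSat S (G.swap b a)
termination_by G => G.size
decreasing_by all_goals (simp [NGoal.size]; try omega)

/-! ### Program clauses -/

/-- Program clauses `D`. -/
inductive NCl (L : NomSig) : Type
  | tt : NCl L
  | atom (A : NAtom L) : NCl L
  | and (D D' : NCl L) : NCl L
  | imp (G : NGoal L) (D : NCl L) : NCl L
  | all (X : ℕ) (σ : NomSort L.NSort L.DSort) (D : NCl L) : NCl L
  | nu (a : L.Name) (D : NCl L) : NCl L

namespace NCl

def rename (f : L.Name → L.Name) : NCl L → NCl L
  | tt => tt
  | atom A => atom (A.rename f)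
  | and D D' => and (rename f D) (rename f D')
  | imp G D => imp (G.rename f) (rename f D)
  | all X σ D => all X σ (rename f D)
  | nu a D => nu (f a) (rename f D)

def swap (a b : L.Name) (D : NCl L) : NCl L := D.rename (swapName a b)

def subst (θ : ℕ → Tm L) : NCl L → NCl L
  | tt => tt
  | atom A => atom (A.subst θ)
  | and D D' => and (subst θ D) (subst θ D')
  | imp G D => imp (G.subst θ) (subst θ D)
  | all X σ D => all X σ (subst (Function.update θ X (Tm.var X)) D)
  | nu a D => nu a (subst θ D)

def size : NCl L → ℕ
  | and D D' => size D + size D' + 1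
  | imp _ D => size D + 1
  | all _ _ D => size D + 1
  | nu _ D => size D + 1
  | _ => 1

@[simp] theorem size_rename (f : L.Name → L.Name) :
    ∀ D : NCl L, (D.rename f).size = D.size := by
  intro D; induction D <;> simp [rename, size, *]

@[simp] theorem size_swap (a b : L.Name) (D : NCl L) : (D.swap a b).size = D.size :=
  size_rename _ D

@[simp] theorem size_subst :
    ∀ (D : NCl L) (θ : ℕ → Tm L), (D.subst θ).size = D.size := by
  intro D; induction D <;> intro θ <;> simp [subst, size, *]

/-- Free names of a program clause. -/
inductive FNa : L.Name → NCl L → Prop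
  | atom (a : L.Name) (A : NAtom L) : NAtom.FNa a A → FNa a (atom A)
  | and₁ (a : L.Name) (D D' : NCl L) : FNa a D → FNa a (and D D')
  | and₂ (a : L.Name) (D D' : NCl L) : FNa a D' → FNa a (and D D')
  | imp₁ (a : L.Name) (G : NGoal L) (D : NCl L) : NGoal.FNa a G → FNa a (imp G D)
  | imp₂ (a : L.Name) (G : NGoal L) (D : NCl L) : FNa a D → FNa a (imp G D)
  | all (a : L.Name) (X : ℕ) (σ : NomSort L.NSort L.DSort) (D : NCl L) :
      FNa a D → FNa a (all X σ D)
  | nu (a c : L.Name) (D : NCl L) : a ≠ c → FNa a D → FNa a (nu c D)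

/-- Free variables of a program clause. -/
inductive FVa : ℕ → NCl L → Prop
  | atom (X : ℕ) (A : NAtom L) : NAtom.FVa X A → FVa X (atom A)
  | and₁ (X : ℕ) (D D' : NCl L) : FVa X D → FVa X (and D D')
  | and₂ (X : ℕ) (D D' : NCl L) : FVa X D' → FVa X (and D D')
  | imp₁ (X : ℕ) (G : NGoal L) (D : NCl L) : NGoal.FVa X G → FVa X (imp G D)
  | imp₂ (X : ℕ) (G : NGoal L) (D : NCl L) : FVa X D → FVa X (imp G D)
  | all (X X' : ℕ) (σ : NomSort L.NSort L.DSort) (D : NCl L) :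
      X ≠ X' → FVa X D → FVa X (all X' σ D)
  | nu (X : ℕ) (c : L.Name) (D : NCl L) : FVa X D → FVa X (nu c D)

/-- Well-sortedness of a program clause relative to a variable sort assignment. -/
def WS (vs : ℕ → NomSort L.NSort L.DSort) : NCl L → Prop
  | tt => True
  | atom A => AtomS vs A
  | and D D' => WS vs D ∧ WS vs D'
  | imp G D => NGoal.WS vs G ∧ WS vs D
  | all X σ D => WS (Function.update vs X σ) D
  | nu _ D => WS vs D

/-- A clause with no free variables. -/
def ClosedV (D : NCl L) : Prop := ∀ X : ℕ, ¬ FVa X D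

/-- A clause with no free names. -/
def ClosedN (D : NCl L) : Prop := ∀ a : L.Name, ¬ FNa a D

/-- И-goal clauses: no И-quantified clause subformulas (goals may contain И). -/
inductive NuGoal : NCl L → Prop
  | tt : NuGoal tt
  | atom (A : NAtom L) : NuGoal (atom A)
  | and (D D' : NCl L) : NuGoal D → NuGoal D' → NuGoal (and D D')
  | imp (G : NGoal L) (D : NCl L) : NuGoal D → NuGoal (imp G D)
  | all (X : ℕ) (σ : NomSort L.NSort L.DSort) (D : NCl L) : NuGoal D → NuGoal (all X σ D)

end NCl

/-- Satisfaction `S ⊨ D` of a (closed) program clause. -/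
def ClSat (S : Set (NAtom L)) : NCl L → Prop
  | NCl.tt => True
  | NCl.atom A => A ∈ S
  | NCl.and D D' => ClSat S D ∧ ClSat S D'
  | NCl.imp G D => GoalSat S G → ClSat S D
  | NCl.all X σ D => ∀ t : Tm L, IsTm t σ → ClSat S (D.subst (substSingle X t))
  | NCl.nu a D => ∀ b : L.Name, b.1 = a.1 → ¬ NCl.FNa b (NCl.nu a D) →
      ClSat S (D.swap b a)
termination_by D => D.size
decreasing_by all_goals (simp [NCl.size]; try omega)
/-! ### General first-order nominal formulas -/

/-- Formulas of nominal logic. -/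
inductive NFm (L : NomSig) : Type
  | tt : NFm L
  | ff : NFm L
  | atom (A : NAtom L) : NFm L
  | eq (t u : Tm L) : NFm L
  | fr (a : L.Name) (t : Tm L) : NFm L
  | sim (t u : Tm L) : NFm L
  | imp (φ ψ : NFm L) : NFm L
  | and (φ ψ : NFm L) : NFm L
  | or (φ ψ : NFm L) : NFm L
  | all (X : ℕ) (σ : NomSort L.NSort L.DSort) (φ : NFm L) : NFm L
  | ex (X : ℕ) (σ : NomSort L.NSort L.DSort) (φ : NFm L) : NFm L
  | nu (a : L.Name) (φ : NFm L) : NFm L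

namespace NFm

def rename (f : L.Name → L.Name) : NFm L → NFm L
  | tt => tt
  | ff => ff
  | atom A => atom (A.rename f)
  | eq t u => eq (t.rename f) (u.rename f)
  | fr a t => fr (f a) (t.rename f)
  | sim t u => sim (t.rename f) (u.rename f)
  | imp φ ψ => imp (rename f φ) (rename f ψ)
  | and φ ψ => and (rename f φ) (rename f ψ)
  | or φ ψ => or (rename f φ) (rename f ψ)
  | all X σ φ => all X σ (rename f φ)
  | ex X σ φ => ex X σ (rename f φ)
  | nu a φ => nu (f a) (rename f φ)

/-- Swapping `(a b)·φ`. -/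
def swap (a b : L.Name) (φ : NFm L) : NFm L := φ.rename (swapName a b)

def subst (θ : ℕ → Tm L) : NFm L → NFm L
  | tt => tt
  | ff => ff
  | atom A => atom (A.subst θ)
  | eq t u => eq (t.subst θ) (u.subst θ)
  | fr a t => fr a (t.subst θ)
  | sim t u => sim (t.subst θ) (u.subst θ)
  | imp φ ψ => imp (subst θ φ) (subst θ ψ)
  | and φ ψ => and (subst θ φ) (subst θ ψ)
  | or φ ψ => or (subst θ φ) (subst θ ψ)
  | all X σ φ => all X σ (subst (Function.update θ X (Tm.var X)) φ)
  | ex X σ φ => ex X σ (subst (Function.update θ X (Tm.var X)) φ)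
  | nu a φ => nu a (subst θ φ)

def size : NFm L → ℕ
  | imp φ ψ => size φ + size ψ + 1
  | and φ ψ => size φ + size ψ + 1
  | or φ ψ => size φ + size ψ + 1
  | all _ _ φ => size φ + 1
  | ex _ _ φ => size φ + 1
  | nu _ φ => size φ + 1
  | _ => 1

@[simp] theorem size_rename (f : L.Name → L.Name) :
    ∀ φ : NFm L, (φ.rename f).size = φ.size := by
  intro φ; induction φ <;> simp [rename, size, *]

@[simp] theorem size_swap (a b : L.Name) (φ : NFm L) : (φ.swap a b).size = φ.size :=
  size_rename _ φ

@[simp] theorem size_subst :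
    ∀ (φ : NFm L) (θ : ℕ → Tm L), (φ.subst θ).size = φ.size := by
  intro φ; induction φ <;> intro θ <;> simp [subst, size, *]

/-- Free names of a formula. -/
inductive FNa : L.Name → NFm L → Prop
  | atom (a : L.Name) (A : NAtom L) : NAtom.FNa a A → FNa a (atom A)
  | eq₁ (a : L.Name) (t u : Tm L) : Tm.FNa a t → FNa a (eq t u)
  | eq₂ (a : L.Name) (t u : Tm L) : Tm.FNa a u → FNa a (eq t u)
  | frN (a : L.Name) (t : Tm L) : FNa a (fr a t)
  | frT (a c : L.Name) (t : Tm L) : Tm.FNa a t → FNa a (fr c t)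
  | sim₁ (a : L.Name) (t u : Tm L) : Tm.FNa a t → FNa a (sim t u)
  | sim₂ (a : L.Name) (t u : Tm L) : Tm.FNa a u → FNa a (sim t u)
  | imp₁ (a : L.Name) (φ ψ : NFm L) : FNa a φ → FNa a (imp φ ψ)
  | imp₂ (a : L.Name) (φ ψ : NFm L) : FNa a ψ → FNa a (imp φ ψ)
  | and₁ (a : L.Name) (φ ψ : NFm L) : FNa a φ → FNa a (and φ ψ)
  | and₂ (a : L.Name) (φ ψ : NFm L) : FNa a ψ → FNa a (and φ ψ)
  | or₁ (a : L.Name) (φ ψ : NFm L) : FNa a φ → FNa a (or φ ψ)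
  | or₂ (a : L.Name) (φ ψ : NFm L) : FNa a ψ → FNa a (or φ ψ)
  | all (a : L.Name) (X : ℕ) (σ : NomSort L.NSort L.DSort) (φ : NFm L) :
      FNa a φ → FNa a (all X σ φ)
  | ex (a : L.Name) (X : ℕ) (σ : NomSort L.NSort L.DSort) (φ : NFm L) :
      FNa a φ → FNa a (ex X σ φ)
  | nu (a c : L.Name) (φ : NFm L) : a ≠ c → FNa a φ → FNa a (nu c φ)

/-- Free variables of a formula. -/
inductive FVa : ℕ → NFm L → Prop
  | atom (X : ℕ) (A : NAtom L) : NAtom.FVa X A → FVa X (atom A)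
  | eq₁ (X : ℕ) (t u : Tm L) : Tm.FVa X t → FVa X (eq t u)
  | eq₂ (X : ℕ) (t u : Tm L) : Tm.FVa X u → FVa X (eq t u)
  | frT (X : ℕ) (c : L.Name) (t : Tm L) : Tm.FVa X t → FVa X (fr c t)
  | sim₁ (X : ℕ) (t u : Tm L) : Tm.FVa X t → FVa X (sim t u)
  | sim₂ (X : ℕ) (t u : Tm L) : Tm.FVa X u → FVa X (sim t u)
  | imp₁ (X : ℕ) (φ ψ : NFm L) : FVa X φ → FVa X (imp φ ψ)
  | imp₂ (X : ℕ) (φ ψ : NFm L) : FVa X ψ → FVa X (imp φ ψ)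
  | and₁ (X : ℕ) (φ ψ : NFm L) : FVa X φ → FVa X (and φ ψ)
  | and₂ (X : ℕ) (φ ψ : NFm L) : FVa X ψ → FVa X (and φ ψ)
  | or₁ (X : ℕ) (φ ψ : NFm L) : FVa X φ → FVa X (or φ ψ)
  | or₂ (X : ℕ) (φ ψ : NFm L) : FVa X ψ → FVa X (or φ ψ)
  | all (X X' : ℕ) (σ : NomSort L.NSort L.DSort) (φ : NFm L) :
      X ≠ X' → FVa X φ → FVa X (all X' σ φ)
  | ex (X X' : ℕ) (σ : NomSort L.NSort L.DSort) (φ : NFm L) :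
      X ≠ X' → FVa X φ → FVa X (ex X' σ φ)
  | nu (X : ℕ) (c : L.Name) (φ : NFm L) : FVa X φ → FVa X (nu c φ)

end NFm

/-- Satisfaction `S ⊨ φ` of a (closed) formula by a Herbrand interpretation. -/
def FmSat (S : Set (NAtom L)) : NFm L → Prop
  | NFm.tt => True
  | NFm.ff => False
  | NFm.atom A => A ∈ S
  | NFm.eq t u => Aeq t u
  | NFm.fr a t => Fresh a t
  | NFm.sim t u => SimTm t u
  | NFm.imp φ ψ => FmSat S φ → FmSat S ψ
  | NFm.and φ ψ => FmSat S φ ∧ FmSat S ψ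
  | NFm.or φ ψ => FmSat S φ ∨ FmSat S ψ
  | NFm.all X σ φ => ∀ t : Tm L, IsTm t σ → FmSat S (φ.subst (substSingle X t))
  | NFm.ex X σ φ => ∃ t : Tm L, IsTm t σ ∧ FmSat S (φ.subst (substSingle X t))
  | NFm.nu a φ => ∀ b : L.Name, b.1 = a.1 → ¬ NFm.FNa b (NFm.nu a φ) →
      FmSat S (φ.swap b a)
termination_by φ => φ.size
decreasing_by all_goals (simp [NFm.size]; try omega)
/-! ### Herbrand models and the one-step deduction operator -/

/-- A Herbrand model of a set of (closed) program clauses: an equivariant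
subset of the Herbrand base satisfying every clause. -/
def IsHModel (Δ : Set (NCl L)) (H : Set (NAtom L)) : Prop :=
  H ⊆ BL L ∧ EquivariantSet H ∧ ∀ D ∈ Δ, ClSat H D

/-- The one-step deduction operator `T_D`. -/
def TOp : NCl L → Set (NAtom L) → Set (NAtom L)
  | NCl.tt, S => S
  | NCl.atom A, S => S ∪ {A}
  | NCl.and D D', S => TOp D S ∪ TOp D' S
  | NCl.imp G D, S => if GoalSat S G then TOp D S else S
  | NCl.all X σ D, S => ⋃ (t : Tm L) (_ : IsTm t σ), TOp (D.subst (substSingle X t)) S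
  | NCl.nu a D, S =>
      ⋃ (b : L.Name) (_ : b.1 = a.1 ∧ ¬ NCl.FNa b (NCl.nu a D)), TOp (D.swap a b) S
termination_by D _ => D.size
decreasing_by all_goals (simp [NCl.size]; try omega)

/-- The one-step deduction operator `T_Δ` of a (nonempty) program
`Δ = {D₁,…,Dₙ}`, i.e. `T_{D₁ ∧ ⋯ ∧ Dₙ}`. -/
def TProg (Δ : Set (NCl L)) (S : Set (NAtom L)) : Set (NAtom L) :=
  ⋃ D ∈ Δ, TOp D S

/-! ### Contexts, substitutions and constraint entailment -/

/-- Context bindings: variable bindings `X:σ` and name bindings `#a:ν`. -/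
inductive CtxBind (L : NomSig) : Type
  | v (X : ℕ) (σ : NomSort L.NSort L.DSort) : CtxBind L
  | n (a : L.Name) : CtxBind L

/-- Contexts, as lists of bindings with the *most recent binding first*. -/
abbrev Ctxx (L : NomSig) : Type := List (CtxBind L)

/-- The variables declared in a context. -/
def ctxVars : Ctxx L → Set ℕ
  | [] => ∅
  | CtxBind.v X _ :: Ξ => insert X (ctxVars Ξ)
  | CtxBind.n _ :: Ξ => ctxVars Ξ

/-- The names declared in a context. -/
def ctxNames : Ctxx L → Set L.Name
  | [] => ∅
  | CtxBind.v _ _ :: Ξ => ctxNames Ξ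
  | CtxBind.n a :: Ξ => insert a (ctxNames Ξ)

def CtxBind.key : CtxBind L → ℕ ⊕ L.Name
  | v X _ => Sum.inl X
  | n a => Sum.inr a

/-- All bindings of a context are distinct. -/
def CtxWF (Ξ : Ctxx L) : Prop := Ξ.Pairwise (fun b c => b.key ≠ c.key)

/-- `θ : Σ`: the ground substitution `θ` satisfies the context `Σ`. -/
def SubstOk : Ctxx L → (ℕ → Tm L) → Prop
  | [], _ => True
  | CtxBind.v X σ :: Ξ, θ => IsTm (θ X) σ ∧ SubstOk Ξ θ
  | CtxBind.n a :: Ξ, θ => (∀ X ∈ ctxVars Ξ, Fresh a (θ X)) ∧ SubstOk Ξ θ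

/-- `θ` satisfies every constraint in `∇`. -/
def SatAll (θ : ℕ → Tm L) (Φ : Finset (NCon L)) : Prop :=
  ∀ C ∈ Φ, ConSat (C.subst θ)

/-- Constraint entailment `Σ;∇ ⊨ C`. -/
def EntC (Ξ : Ctxx L) (Φ : Finset (NCon L)) (C : NCon L) : Prop :=
  ∀ θ : ℕ → Tm L, SubstOk Ξ θ → SatAll θ Φ → ConSat (C.subst θ)

/-- The free variables and names of a constraint are declared in `Σ`. -/
def ConDecl (Ξ : Ctxx L) (C : NCon L) : Prop :=
  (∀ X, NCon.FVa X C → X ∈ ctxVars Ξ) ∧ (∀ a, NCon.FNa a C → a ∈ ctxNames Ξ)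

/-- The free variables and names of a goal are declared in `Σ`. -/
def GoalDecl (Ξ : Ctxx L) (G : NGoal L) : Prop :=
  (∀ X, NGoal.FVa X G → X ∈ ctxVars Ξ) ∧ (∀ a, NGoal.FNa a G → a ∈ ctxNames Ξ)

/-- The free variables and names of a program clause are declared in `Σ`. -/
def ClDecl (Ξ : Ctxx L) (D : NCl L) : Prop :=
  (∀ X, NCl.FVa X D → X ∈ ctxVars Ξ) ∧ (∀ a, NCl.FNa a D → a ∈ ctxNames Ξ)

/-- The free variables and names of an atom are declared in `Σ`. -/
def AtomDecl (Ξ : Ctxx L) (A : NAtom L) : Prop :=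
  (∀ X, NAtom.FVa X A → X ∈ ctxVars Ξ) ∧ (∀ a, NAtom.FNa a A → a ∈ ctxNames Ξ)

/-! ### Uniform / focused proof search -/

mutual
/-- Uniform derivability `Σ;Δ;∇ ⟶ G`. -/
inductive UD (Δ : Set (NCl L)) : Ctxx L → Finset (NCon L) → NGoal L → Prop
  | top (Ξ : Ctxx L) (Φ : Finset (NCon L)) : UD Δ Ξ Φ NGoal.tt
  | con (Ξ : Ctxx L) (Φ : Finset (NCon L)) (C : NCon L) :
      EntC Ξ Φ C → UD Δ Ξ Φ (NGoal.con C)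
  | andR (Ξ : Ctxx L) (Φ : Finset (NCon L)) (G₁ G₂ : NGoal L) :
      UD Δ Ξ Φ G₁ → UD Δ Ξ Φ G₂ → UD Δ Ξ Φ (NGoal.and G₁ G₂)
  | orR₁ (Ξ : Ctxx L) (Φ : Finset (NCon L)) (G₁ G₂ : NGoal L) :
      UD Δ Ξ Φ G₁ → UD Δ Ξ Φ (NGoal.or G₁ G₂)
  | orR₂ (Ξ : Ctxx L) (Φ : Finset (NCon L)) (G₁ G₂ : NGoal L) :
      UD Δ Ξ Φ G₂ → UD Δ Ξ Φ (NGoal.or G₁ G₂)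
  | exR (Ξ : Ctxx L) (Φ : Finset (NCon L)) (X : ℕ) (σ : NomSort L.NSort L.DSort)
      (C : NCon L) (G : NGoal L) :
      EntC Ξ Φ (NCon.ex X σ C) → UD Δ (CtxBind.v X σ :: Ξ) (insert C Φ) G →
      UD Δ Ξ Φ (NGoal.ex X σ G)
  | nuR (Ξ : Ctxx L) (Φ : Finset (NCon L)) (a : L.Name) (C : NCon L) (G : NGoal L) :
      EntC Ξ Φ (NCon.nu a C) → UD Δ (CtxBind.n a :: Ξ) (insert C Φ) G →
      UD Δ Ξ Φ (NGoal.nu a G)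
  | sel (Ξ : Ctxx L) (Φ : Finset (NCon L)) (D : NCl L) (A : NAtom L) :
      D ∈ Δ → FD Δ Ξ Φ D A → UD Δ Ξ Φ (NGoal.atom A)

/-- Focused derivability `Σ;Δ;∇ ⟶ [D] ⇒ A`. -/
inductive FD (Δ : Set (NCl L)) : Ctxx L → Finset (NCon L) → NCl L → NAtom L → Prop
  | hyp (Ξ : Ctxx L) (Φ : Finset (NCon L)) (A' A : NAtom L) :
      EntC Ξ Φ (NCon.simA A' A) → FD Δ Ξ Φ (NCl.atom A') A
  | andL₁ (Ξ : Ctxx L) (Φ : Finset (NCon L)) (D₁ D₂ : NCl L) (A : NAtom L) :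
      FD Δ Ξ Φ D₁ A → FD Δ Ξ Φ (NCl.and D₁ D₂) A
  | andL₂ (Ξ : Ctxx L) (Φ : Finset (NCon L)) (D₁ D₂ : NCl L) (A : NAtom L) :
      FD Δ Ξ Φ D₂ A → FD Δ Ξ Φ (NCl.and D₁ D₂) A
  | impL (Ξ : Ctxx L) (Φ : Finset (NCon L)) (G : NGoal L) (D : NCl L) (A : NAtom L) :
      FD Δ Ξ Φ D A → UD Δ Ξ Φ G → FD Δ Ξ Φ (NCl.imp G D) A
  | allL (Ξ : Ctxx L) (Φ : Finset (NCon L)) (X : ℕ) (σ : NomSort L.NSort L.DSort)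
      (C : NCon L) (D : NCl L) (A : NAtom L) :
      EntC Ξ Φ (NCon.ex X σ C) → FD Δ (CtxBind.v X σ :: Ξ) (insert C Φ) D A →
      FD Δ Ξ Φ (NCl.all X σ D) A
  | nuL (Ξ : Ctxx L) (Φ : Finset (NCon L)) (a : L.Name) (C : NCon L) (D : NCl L)
      (A : NAtom L) :
      EntC Ξ Φ (NCon.nu a C) → FD Δ (CtxBind.n a :: Ξ) (insert C Φ) D A →
      FD Δ Ξ Φ (NCl.nu a D) A
end

mutual
/-- Uniform derivability for ≈-resolution, `Σ;Δ;∇ ⟶≈ G`. -/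
inductive UDe (Δ : Set (NCl L)) : Ctxx L → Finset (NCon L) → NGoal L → Prop
  | top (Ξ : Ctxx L) (Φ : Finset (NCon L)) : UDe Δ Ξ Φ NGoal.tt
  | con (Ξ : Ctxx L) (Φ : Finset (NCon L)) (C : NCon L) :
      EntC Ξ Φ C → UDe Δ Ξ Φ (NGoal.con C)
  | andR (Ξ : Ctxx L) (Φ : Finset (NCon L)) (G₁ G₂ : NGoal L) :
      UDe Δ Ξ Φ G₁ → UDe Δ Ξ Φ G₂ → UDe Δ Ξ Φ (NGoal.and G₁ G₂)
  | orR₁ (Ξ : Ctxx L) (Φ : Finset (NCon L)) (G₁ G₂ : NGoal L) :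
      UDe Δ Ξ Φ G₁ → UDe Δ Ξ Φ (NGoal.or G₁ G₂)
  | orR₂ (Ξ : Ctxx L) (Φ : Finset (NCon L)) (G₁ G₂ : NGoal L) :
      UDe Δ Ξ Φ G₂ → UDe Δ Ξ Φ (NGoal.or G₁ G₂)
  | exR (Ξ : Ctxx L) (Φ : Finset (NCon L)) (X : ℕ) (σ : NomSort L.NSort L.DSort)
      (C : NCon L) (G : NGoal L) :
      EntC Ξ Φ (NCon.ex X σ C) → UDe Δ (CtxBind.v X σ :: Ξ) (insert C Φ) G →
      UDe Δ Ξ Φ (NGoal.ex X σ G)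
  | nuR (Ξ : Ctxx L) (Φ : Finset (NCon L)) (a : L.Name) (C : NCon L) (G : NGoal L) :
      EntC Ξ Φ (NCon.nu a C) → UDe Δ (CtxBind.n a :: Ξ) (insert C Φ) G →
      UDe Δ Ξ Φ (NGoal.nu a G)
  | sel (Ξ : Ctxx L) (Φ : Finset (NCon L)) (D : NCl L) (A : NAtom L) :
      D ∈ Δ → FDe Δ Ξ Φ D A → UDe Δ Ξ Φ (NGoal.atom A)

/-- Focused derivability for ≈-resolution, `Σ;Δ;∇ ⟶≈ [D] ⇒ A`. -/
inductive FDe (Δ : Set (NCl L)) : Ctxx L → Finset (NCon L) → NCl L → NAtom L → Prop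
  | hyp (Ξ : Ctxx L) (Φ : Finset (NCon L)) (A' A : NAtom L) :
      EntC Ξ Φ (NCon.aeqA A' A) → FDe Δ Ξ Φ (NCl.atom A') A
  | andL₁ (Ξ : Ctxx L) (Φ : Finset (NCon L)) (D₁ D₂ : NCl L) (A : NAtom L) :
      FDe Δ Ξ Φ D₁ A → FDe Δ Ξ Φ (NCl.and D₁ D₂) A
  | andL₂ (Ξ : Ctxx L) (Φ : Finset (NCon L)) (D₁ D₂ : NCl L) (A : NAtom L) :
      FDe Δ Ξ Φ D₂ A → FDe Δ Ξ Φ (NCl.and D₁ D₂) A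
  | impL (Ξ : Ctxx L) (Φ : Finset (NCon L)) (G : NGoal L) (D : NCl L) (A : NAtom L) :
      FDe Δ Ξ Φ D A → UDe Δ Ξ Φ G → FDe Δ Ξ Φ (NCl.imp G D) A
  | allL (Ξ : Ctxx L) (Φ : Finset (NCon L)) (X : ℕ) (σ : NomSort L.NSort L.DSort)
      (C : NCon L) (D : NCl L) (A : NAtom L) :
      EntC Ξ Φ (NCon.ex X σ C) → FDe Δ (CtxBind.v X σ :: Ξ) (insert C Φ) D A →
      FDe Δ Ξ Φ (NCl.all X σ D) A
  | nuL (Ξ : Ctxx L) (Φ : Finset (NCon L)) (a : L.Name) (C : NCon L) (D : NCl L)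
      (A : NAtom L) :
      EntC Ξ Φ (NCon.nu a C) → FDe Δ (CtxBind.n a :: Ξ) (insert C Φ) D A →
      FDe Δ Ξ Φ (NCl.nu a D) A
end

/-! ### Residuated proof search -/

mutual
/-- Residuated uniform derivability `Σ;Δ ⟶ G ↘ C`. -/
inductive RG (Δ : Set (NCl L)) : Ctxx L → NGoal L → NCon L → Prop
  | con (Ξ : Ctxx L) (C : NCon L) : RG Δ Ξ (NGoal.con C) C
  | top (Ξ : Ctxx L) : RG Δ Ξ NGoal.tt NCon.tt
  | andR (Ξ : Ctxx L) (G₁ G₂ : NGoal L) (C₁ C₂ : NCon L) :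
      RG Δ Ξ G₁ C₁ → RG Δ Ξ G₂ C₂ → RG Δ Ξ (NGoal.and G₁ G₂) (NCon.and C₁ C₂)
  | orR₁ (Ξ : Ctxx L) (G₁ G₂ : NGoal L) (C : NCon L) :
      RG Δ Ξ G₁ C → RG Δ Ξ (NGoal.or G₁ G₂) C
  | orR₂ (Ξ : Ctxx L) (G₁ G₂ : NGoal L) (C : NCon L) :
      RG Δ Ξ G₂ C → RG Δ Ξ (NGoal.or G₁ G₂) C
  | exR (Ξ : Ctxx L) (X : ℕ) (σ : NomSort L.NSort L.DSort) (G : NGoal L) (C : NCon L) :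
      RG Δ (CtxBind.v X σ :: Ξ) G C → RG Δ Ξ (NGoal.ex X σ G) (NCon.ex X σ C)
  | nuR (Ξ : Ctxx L) (a : L.Name) (G : NGoal L) (C : NCon L) :
      RG Δ (CtxBind.n a :: Ξ) G C → RG Δ Ξ (NGoal.nu a G) (NCon.nu a C)
  | back (Ξ : Ctxx L) (A : NAtom L) (D : NCl L) (G : NGoal L) (C : NCon L) :
      D ∈ Δ → RF Δ Ξ D A G → RG Δ Ξ G C → RG Δ Ξ (NGoal.atom A) C

/-- Residuated focused derivability `Σ;Δ ⟶ [D] ⇒ A ↘ G`. -/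
inductive RF (Δ : Set (NCl L)) : Ctxx L → NCl L → NAtom L → NGoal L → Prop
  | hyp (Ξ : Ctxx L) (A' A : NAtom L) :
      RF Δ Ξ (NCl.atom A') A (NGoal.con (NCon.simA A A'))
  | andL₁ (Ξ : Ctxx L) (D₁ D₂ : NCl L) (A : NAtom L) (G : NGoal L) :
      RF Δ Ξ D₁ A G → RF Δ Ξ (NCl.and D₁ D₂) A G
  | andL₂ (Ξ : Ctxx L) (D₁ D₂ : NCl L) (A : NAtom L) (G : NGoal L) :
      RF Δ Ξ D₂ A G → RF Δ Ξ (NCl.and D₁ D₂) A G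
  | impL (Ξ : Ctxx L) (G : NGoal L) (D : NCl L) (A : NAtom L) (G' : NGoal L) :
      RF Δ Ξ D A G' → RF Δ Ξ (NCl.imp G D) A (NGoal.and G G')
  | allL (Ξ : Ctxx L) (X : ℕ) (σ : NomSort L.NSort L.DSort) (D : NCl L) (A : NAtom L)
      (G : NGoal L) :
      RF Δ (CtxBind.v X σ :: Ξ) D A G → RF Δ Ξ (NCl.all X σ D) A (NGoal.ex X σ G)
  | nuL (Ξ : Ctxx L) (a : L.Name) (D : NCl L) (A : NAtom L) (G : NGoal L) :
      RF Δ (CtxBind.n a :: Ξ) D A G → RF Δ Ξ (NCl.nu a D) A (NGoal.nu a G)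
end

/-! ### Operational semantics -/

/-- Operational states `⟨Σ; Γ; ∇⟩`. -/
structure OState (L : NomSig) : Type where
  ctx : Ctxx L
  goals : List (NGoal L)
  cons : Finset (NCon L)

/-- The operational transition relation relative to a program `Δ`. -/
inductive OStep (Δ : Set (NCl L)) : OState L → OState L → Prop
  | back (Ξ : Ctxx L) (Φ : Finset (NCon L)) (Γ : List (NGoal L)) (D : NCl L)
      (A : NAtom L) (G : NGoal L) :
      D ∈ Δ → RF Δ Ξ D A G →
      OStep Δ ⟨Ξ, NGoal.atom A :: Γ, Φ⟩ ⟨Ξ, G :: Γ, Φ⟩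
  | con (Ξ : Ctxx L) (Φ : Finset (NCon L)) (Γ : List (NGoal L)) (C : NCon L) :
      (∃ θ : ℕ → Tm L, SubstOk Ξ θ ∧ SatAll θ (insert C Φ)) →
      OStep Δ ⟨Ξ, NGoal.con C :: Γ, Φ⟩ ⟨Ξ, Γ, insert C Φ⟩
  | top (Ξ : Ctxx L) (Φ : Finset (NCon L)) (Γ : List (NGoal L)) :
      OStep Δ ⟨Ξ, NGoal.tt :: Γ, Φ⟩ ⟨Ξ, Γ, Φ⟩
  | and (Ξ : Ctxx L) (Φ : Finset (NCon L)) (Γ : List (NGoal L)) (G₁ G₂ : NGoal L) :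
      OStep Δ ⟨Ξ, NGoal.and G₁ G₂ :: Γ, Φ⟩ ⟨Ξ, G₁ :: G₂ :: Γ, Φ⟩
  | or₁ (Ξ : Ctxx L) (Φ : Finset (NCon L)) (Γ : List (NGoal L)) (G₁ G₂ : NGoal L) :
      OStep Δ ⟨Ξ, NGoal.or G₁ G₂ :: Γ, Φ⟩ ⟨Ξ, G₁ :: Γ, Φ⟩
  | or₂ (Ξ : Ctxx L) (Φ : Finset (NCon L)) (Γ : List (NGoal L)) (G₁ G₂ : NGoal L) :
      OStep Δ ⟨Ξ, NGoal.or G₁ G₂ :: Γ, Φ⟩ ⟨Ξ, G₂ :: Γ, Φ⟩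
  | ex (Ξ : Ctxx L) (Φ : Finset (NCon L)) (Γ : List (NGoal L)) (X : ℕ)
      (σ : NomSort L.NSort L.DSort) (G : NGoal L) :
      OStep Δ ⟨Ξ, NGoal.ex X σ G :: Γ, Φ⟩ ⟨CtxBind.v X σ :: Ξ, G :: Γ, Φ⟩
  | nu (Ξ : Ctxx L) (Φ : Finset (NCon L)) (Γ : List (NGoal L)) (a : L.Name)
      (G : NGoal L) :
      OStep Δ ⟨Ξ, NGoal.nu a G :: Γ, Φ⟩ ⟨CtxBind.n a :: Ξ, G :: Γ, Φ⟩

/-- `∃Σ[C]`: close a constraint by quantifying over all bindings of a context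
(innermost quantifier for the most recent binding). -/
def exCtx : Ctxx L → NCon L → NCon L
  | [], C => C
  | CtxBind.v X σ :: Ξ, C => exCtx Ξ (NCon.ex X σ C)
  | CtxBind.n a :: Ξ, C => exCtx Ξ (NCon.nu a C)

/-- The conjunction of a finite set of constraints. -/
def bigAnd (Φ : Finset (NCon L)) : NCon L := Φ.toList.foldr NCon.and NCon.tt
/-! ### Terms: renaming and substitution -/

@[simp] theorem Tm.rename_var (f : L.Name → L.Name) (X : ℕ) :
    (Tm.var X : Tm L).rename f = Tm.var X := by
  simp [Tm.rename]

@[simp] theorem Tm.rename_name (f : L.Name → L.Name) (c : L.Name) :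
    (Tm.name c : Tm L).rename f = Tm.name (f c) := by
  simp [Tm.rename]

@[simp] theorem Tm.rename_app (f : L.Name → L.Name) (g : L.Func) (ts : List (Tm L)) :
    (Tm.app g ts).rename f = Tm.app g (ts.map (Tm.rename f)) := by
  simp [Tm.rename]

@[simp] theorem Tm.rename_abs (f : L.Name → L.Name) (c : L.Name) (t : Tm L) :
    (Tm.abs c t).rename f = Tm.abs (f c) (t.rename f) := by
  simp [Tm.rename]

@[simp] theorem Tm.subst_var (θ : ℕ → Tm L) (X : ℕ) : (Tm.var X : Tm L).subst θ = θ X := by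
  simp [Tm.subst]

@[simp] theorem Tm.subst_name (θ : ℕ → Tm L) (c : L.Name) :
    (Tm.name c : Tm L).subst θ = Tm.name c := by
  simp [Tm.subst]

@[simp] theorem Tm.subst_app (θ : ℕ → Tm L) (g : L.Func) (ts : List (Tm L)) :
    (Tm.app g ts).subst θ = Tm.app g (ts.map (Tm.subst θ)) := by
  simp [Tm.subst]

@[simp] theorem Tm.subst_abs (θ : ℕ → Tm L) (c : L.Name) (t : Tm L) :
    (Tm.abs c t).subst θ = Tm.abs c (t.subst θ) := by
  simp [Tm.subst]

/-- Structural induction on terms, with the argument lists of function symbols treated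
elementwise. -/
theorem Tm.indOn {P : Tm L → Prop} (var : ∀ X, P (Tm.var X)) (name : ∀ c, P (Tm.name c))
    (app : ∀ g ts, (∀ t ∈ ts, P t) → P (Tm.app g ts))
    (abs : ∀ c t, P t → P (Tm.abs c t)) (t : Tm L) : P t :=
  Tm.rec (motive_1 := P) (motive_2 := fun ts => ∀ t ∈ ts, P t) var name app abs
    (by simp) (fun hd tl h₁ h₂ => by
      intro t ht
      rcases List.mem_cons.1 ht with rfl | ht
      · exact h₁
      · exact h₂ t ht) t

theorem Tm.rename_rename (f g : L.Name → L.Name) (t : Tm L) :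
    (t.rename f).rename g = t.rename (g ∘ f) := by
  induction t using Tm.indOn with
  | var X => simp
  | name c => simp
  | app h ts ih => simpa using ih
  | abs c t ih => simp [ih]

theorem Tm.rename_injective {f : L.Name → L.Name} (hf : Function.Injective f) :
    Function.Injective (Tm.rename f) := by
  intro t
  induction t using Tm.indOn with
  | var X => intro u h; cases u <;> simp_all
  | name c =>
    intro u h
    cases u <;> simp at h
    rw [hf h]
  | app g ts ih =>
    intro u h
    cases u with
    | app g' us =>
      simp only [Tm.rename_app, Tm.app.injEq] at h
      obtain ⟨rfl, h⟩ := h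
      congr 1
      induction ts generalizing us with
      | nil => simpa using h.symm
      | cons t ts ihts =>
        cases us with
        | nil => simp at h
        | cons u us =>
          simp only [List.map_cons, List.cons.injEq] at h
          rw [ih t (by simp) h.1, ihts (fun s hs => ih s (by simp [hs])) us h.2]
    | _ => simp at h
  | abs c t ih =>
    intro u h
    cases u <;> simp at h
    rw [hf h.1, ih h.2]

theorem Tm.rename_subst (f : L.Name → L.Name) (θ : ℕ → Tm L) (t : Tm L) :
    (t.subst θ).rename f = (t.rename f).subst (fun X => (θ X).rename f) := by
  induction t using Tm.indOn with
  | var X => simp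
  | name c => simp
  | app h ts ih => simpa using ih
  | abs c t ih => simp [ih]

theorem Tm.subst_subst (θ ρ : ℕ → Tm L) (t : Tm L) :
    (t.subst θ).subst ρ = t.subst (fun X => (θ X).subst ρ) := by
  induction t using Tm.indOn with
  | var X => simp
  | name c => simp
  | app h ts ih => simpa using ih
  | abs c t ih => simp [ih]

theorem Tm.subst_id (t : Tm L) : t.subst Tm.var = t := by
  induction t using Tm.indOn with
  | var X => simp
  | name c => simp
  | app h ts ih => simpa using (List.map_congr_left ih).trans (List.map_id' ts)
  | abs c t ih => simp [ih]

theorem Tm.FNa.subst {a : L.Name} {t : Tm L} (h : Tm.FNa a t) (ρ : ℕ → Tm L) :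
    Tm.FNa a (t.subst ρ) := by
  induction h with
  | name => simpa using Tm.FNa.name _
  | app f ts t ht _ ih =>
    simp only [Tm.subst_app]
    exact .app _ _ _ _ (List.mem_map_of_mem ht) ih
  | abs b t hab _ ih =>
    simp only [Tm.subst_abs]
    exact .abs _ _ _ hab ih

theorem Tm.FNa.rename {f : L.Name → L.Name} (hf : Function.Injective f) {a : L.Name} {t : Tm L}
    (h : Tm.FNa a t) : Tm.FNa (f a) (t.rename f) := by
  induction h with
  | name => simpa using Tm.FNa.name _
  | app g ts t ht _ ih =>
    simp only [Tm.rename_app]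
    exact .app _ _ _ _ (List.mem_map_of_mem ht) ih
  | abs b t hab _ ih =>
    simp only [Tm.rename_abs]
    exact .abs _ _ _ (fun h => hab (hf h)) ih

/-! ### Swappings and permutations of names -/

theorem swapName_invol (a b c : L.Name) : swapName a b (swapName a b c) = c := by
  unfold swapName
  split_ifs <;> simp_all

theorem swapName_inj (a b : L.Name) : Function.Injective (swapName a b) :=
  Function.LeftInverse.injective (swapName_invol a b)

theorem swapName_sort {a b : L.Name} (h : a.1 = b.1) (c : L.Name) :
    (swapName a b c).1 = c.1 := by
  unfold swapName
  split_ifs <;> simp_all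

theorem swapName_comm {f : L.Name → L.Name} (hf : Function.Injective f) (a b : L.Name) :
    f ∘ swapName a b = swapName (f a) (f b) ∘ f := by
  funext c
  simp only [swapName, Function.comp, hf.eq_iff]
  split_ifs <;> rfl

theorem IsPerm.swapName {a b : L.Name} (h : a.1 = b.1) : IsPerm (swapName a b) := by
  refine ⟨⟨swapName_inj a b, Function.RightInverse.surjective (swapName_invol a b)⟩,
    swapName_sort h, ?_⟩
  refine (Set.toFinite {a, b}).subset ?_
  intro c hc
  by_contra hn
  apply hc
  simp only [Set.mem_insert_iff, Set.mem_singleton_iff, not_or] at hn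
  simp [_root_.swapName, hn.1, hn.2]

theorem IsPerm.comp {f g : L.Name → L.Name} (hf : IsPerm f) (hg : IsPerm g) :
    IsPerm (f ∘ g) := by
  refine ⟨hf.1.comp hg.1, fun a => by simp [hf.2.1, hg.2.1], ?_⟩
  refine (hf.2.2.union hg.2.2).subset ?_
  intro c hc
  by_contra hn
  simp only [Set.mem_union, Set.mem_ofPred_eq, not_or, not_not] at hn
  exact hc (by simp [hn.1, hn.2])

/-! ### Equivariance of the basic relations -/

theorem Fresh.rename {f : L.Name → L.Name} (hf : Function.Injective f) {a : L.Name} {t : Tm L}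
    (h : Fresh a t) : Fresh (f a) (t.rename f) := by
  induction h with
  | name b hab => simpa using Fresh.name _ _ (fun h => hab (hf h))
  | app g ts _ ih =>
    simp only [Tm.rename_app]
    refine .app _ _ _ ?_
    simpa using ih
  | absSame t => simpa using Fresh.absSame _ _
  | absDiff b t hab _ ih => simpa using Fresh.absDiff _ _ _ (fun h => hab (hf h)) ih

theorem Aeq.rename {f : L.Name → L.Name} (hf : Function.Injective f) {t u : Tm L}
    (h : Aeq t u) : Aeq (t.rename f) (u.rename f) := by
  induction h with
  | name a => simpa using Aeq.name _
  | app g ts us hl _ ih =>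
    simp only [Tm.rename_app]
    refine .app _ _ _ (by simpa using hl) ?_
    intro p hp
    rw [List.zip_map, List.mem_map] at hp
    obtain ⟨q, hq, rfl⟩ := hp
    exact ih q hq
  | absSame a t u _ ih => simpa using Aeq.absSame _ _ _ ih
  | absDiff a b t u hfr _ ih =>
    simp only [Tm.rename_abs]
    refine .absDiff _ _ _ _ (hfr.rename hf) ?_
    simpa only [Tm.swap, Tm.rename_rename, swapName_comm hf] using ih

theorem IsTm.rename {f : L.Name → L.Name} (hf : ∀ a, (f a).1 = a.1) {t : Tm L}
    {σ : NomSort L.NSort L.DSort} (h : IsTm t σ) : IsTm (t.rename f) σ := by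
  induction h with
  | name a =>
    rw [Tm.rename_name, ← hf a]
    exact .name _
  | app g ts hl _ ih =>
    simp only [Tm.rename_app]
    refine .app _ _ (by simpa using hl) ?_
    intro p hp
    rw [List.zip_map_left, List.mem_map] at hp
    obtain ⟨q, hq, rfl⟩ := hp
    exact ih q hq
  | abs a t σ _ ih =>
    rw [Tm.rename_abs, ← hf a]
    exact .abs _ _ _ ih

theorem NAtom.rename_rename (f g : L.Name → L.Name) (A : NAtom L) :
    (A.rename f).rename g = A.rename (g ∘ f) := by
  simp [NAtom.rename, Tm.rename_rename, Function.comp_def]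

theorem AtomAeq.rename {f : L.Name → L.Name} (hf : Function.Injective f) {A B : NAtom L}
    (h : AtomAeq A B) : AtomAeq (A.rename f) (B.rename f) := by
  obtain ⟨h₁, h₂, h₃⟩ := h
  refine ⟨h₁, by simpa [NAtom.rename] using h₂, ?_⟩
  intro p hp
  simp only [NAtom.rename] at hp
  rw [List.zip_map, List.mem_map] at hp
  obtain ⟨q, hq, rfl⟩ := hp
  exact (h₃ q hq).rename hf

/-- Conjugating the witnessing permutation by the swapping, which is its own inverse. -/
theorem conj_swapName (p q : L.Name) (π : L.Name → L.Name) :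
    (swapName p q ∘ π ∘ swapName p q) ∘ swapName p q = swapName p q ∘ π := by
  funext c
  simp [swapName_invol]

theorem SimTm.swapName {p q : L.Name} (hpq : p.1 = q.1) {t u : Tm L} (h : SimTm t u) :
    SimTm (t.rename (swapName p q)) (u.rename (swapName p q)) := by
  obtain ⟨π, hπ, h⟩ := h
  refine ⟨_root_.swapName p q ∘ π ∘ _root_.swapName p q,
    (IsPerm.swapName hpq).comp (hπ.comp (IsPerm.swapName hpq)), ?_⟩
  rw [Tm.rename_rename, conj_swapName, ← Tm.rename_rename]
  exact h.rename (swapName_inj p q)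

theorem AtomSim.swapName {p q : L.Name} (hpq : p.1 = q.1) {A B : NAtom L} (h : AtomSim A B) :
    AtomSim (A.rename (swapName p q)) (B.rename (swapName p q)) := by
  obtain ⟨π, hπ, h⟩ := h
  refine ⟨_root_.swapName p q ∘ π ∘ _root_.swapName p q,
    (IsPerm.swapName hpq).comp (hπ.comp (IsPerm.swapName hpq)), ?_⟩
  rw [NAtom.rename_rename, conj_swapName, ← NAtom.rename_rename]
  exact h.rename (swapName_inj p q)

/-! ### Ground terms -/

/-- A term without variables, expressed as invariance under every substitution. -/
def Tm.Ground (t : Tm L) : Prop := ∀ ρ : ℕ → Tm L, t.subst ρ = t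

theorem IsTm.ground {t : Tm L} {σ : NomSort L.NSort L.DSort} (h : IsTm t σ) : t.Ground := by
  intro ρ
  induction h with
  | name a => simp
  | app g ts hl _ ih =>
    simp only [Tm.subst_app, Tm.app.injEq, true_and]
    refine List.ext_getElem (by simp) fun i h₁ h₂ => ?_
    have h₃ : i < (ts.zip (L.fArgs g)).length := by simp; omega
    simpa using ih _ (List.getElem_mem h₃)
  | abs a t σ _ ih => simp [ih]

theorem Tm.Ground.of_rename {f : L.Name → L.Name} (hf : Function.Injective f)
    {t : Tm L} (h : (t.rename f).Ground) : t.Ground := by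
  intro ρ
  apply Tm.rename_injective hf
  rw [Tm.rename_subst, h]

theorem Tm.Ground.rename_swapName {t : Tm L} (h : t.Ground) (p q : L.Name) :
    (t.rename (swapName p q)).Ground := by
  apply Tm.Ground.of_rename (swapName_inj p q)
  have : swapName p q ∘ swapName p q = (fun c => c) := funext (swapName_invol p q)
  rw [Tm.rename_rename, this]
  have hid : ∀ u : Tm L, u.rename (fun c => c) = u := by
    intro u
    induction u using Tm.indOn with
    | var X => simp
    | name c => simp
    | app h ts ih => simpa using (List.map_congr_left ih).trans (List.map_id' ts)
    | abs c t ih => simp [ih]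
  rwa [hid]

/-- Alpha-equivalence has no rule for variables, so it only relates variable-free terms. -/
theorem Aeq.ground {t u : Tm L} (h : Aeq t u) : t.Ground ∧ u.Ground := by
  induction h with
  | name a => exact ⟨fun ρ => by simp, fun ρ => by simp⟩
  | app g ts us hl _ ih =>
    constructor
    · intro ρ
      simp only [Tm.subst_app, Tm.app.injEq, true_and]
      refine List.ext_getElem (by simp) fun i h₁ h₂ => ?_
      have h₃ : i < (ts.zip us).length := by simp; omega
      simpa using (ih _ (List.getElem_mem h₃)).1 ρ
    · intro ρ
      simp only [Tm.subst_app, Tm.app.injEq, true_and]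
      refine List.ext_getElem (by simp) fun i h₁ h₂ => ?_
      have h₃ : i < (ts.zip us).length := by simp; omega
      simpa using (ih _ (List.getElem_mem h₃)).2 ρ
  | absSame a t u _ ih => exact ⟨fun ρ => by simp [ih.1 ρ], fun ρ => by simp [ih.2 ρ]⟩
  | absDiff a b t u _ _ ih =>
    have hu : u.Ground := ih.2.of_rename (swapName_inj a b)
    exact ⟨fun ρ => by simp [ih.1 ρ], fun ρ => by simp [hu ρ]⟩

theorem Fresh.subst {a : L.Name} {t : Tm L} (h : Fresh a t) (ρ : ℕ → Tm L) :
    Fresh a (t.subst ρ) := by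
  induction h with
  | name b hab => simpa using Fresh.name _ _ hab
  | app g ts _ ih =>
    simp only [Tm.subst_app]
    refine .app _ _ _ ?_
    simpa using ih
  | absSame t => simpa using Fresh.absSame _ _
  | absDiff b t hab _ ih => simpa using Fresh.absDiff _ _ _ hab ih

theorem AtomAeq.ground {A B : NAtom L} (h : AtomAeq A B) :
    (∀ t ∈ A.args, t.Ground) ∧ ∀ t ∈ B.args, t.Ground := by
  obtain ⟨_, h₂, h₃⟩ := h
  constructor
  · intro t ht
    obtain ⟨i, hi, rfl⟩ := List.getElem_of_mem ht
    have hz : i < (A.args.zip B.args).length := by simp; omega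
    simpa using (h₃ _ (List.getElem_mem hz)).ground.1
  · intro t ht
    obtain ⟨i, hi, rfl⟩ := List.getElem_of_mem ht
    have hz : i < (A.args.zip B.args).length := by simp; omega
    simpa using (h₃ _ (List.getElem_mem hz)).ground.2

theorem NAtom.subst_ground {A : NAtom L} (h : ∀ t ∈ A.args, t.Ground) (ρ : ℕ → Tm L) :
    A.subst ρ = A := by
  cases A with
  | mk r ts =>
    simp only [NAtom.subst, NAtom.mk.injEq, true_and]
    exact (List.map_congr_left fun t ht => h t ht ρ).trans (List.map_id _)

theorem AtomAeq.subst {A B : NAtom L} (h : AtomAeq A B) (ρ : ℕ → Tm L) :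
    AtomAeq (A.subst ρ) (B.subst ρ) := by
  rwa [NAtom.subst_ground h.ground.1, NAtom.subst_ground h.ground.2]

theorem Aeq.subst {t u : Tm L} (h : Aeq t u) (ρ : ℕ → Tm L) : Aeq (t.subst ρ) (u.subst ρ) := by
  rwa [h.ground.1, h.ground.2]

theorem SimTm.subst {t u : Tm L} (h : SimTm t u) (ρ : ℕ → Tm L) :
    SimTm (t.subst ρ) (u.subst ρ) := by
  obtain ⟨π, hπ, h⟩ := h
  refine ⟨π, hπ, ?_⟩
  rwa [h.ground.1.of_rename hπ.1.injective, h.ground.2]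

theorem AtomSim.subst {A B : NAtom L} (h : AtomSim A B) (ρ : ℕ → Tm L) :
    AtomSim (A.subst ρ) (B.subst ρ) := by
  obtain ⟨π, hπ, h⟩ := h
  refine ⟨π, hπ, ?_⟩
  rw [NAtom.subst_ground h.ground.2, NAtom.subst_ground]
  · exact h
  · intro t ht
    exact (h.ground.1 _ (List.mem_map_of_mem ht)).of_rename hπ.1.injective

/-! ### Constraints: renaming and substitution -/

theorem NAtom.rename_subst (f : L.Name → L.Name) (θ : ℕ → Tm L) (A : NAtom L) :
    (A.subst θ).rename f = (A.rename f).subst (fun X => (θ X).rename f) := by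
  simp [NAtom.rename, NAtom.subst, Tm.rename_subst]

theorem NAtom.subst_subst (θ ρ : ℕ → Tm L) (A : NAtom L) :
    (A.subst θ).subst ρ = A.subst (fun X => (θ X).subst ρ) := by
  simp [NAtom.subst, Tm.subst_subst]

theorem NAtom.subst_id (A : NAtom L) : A.subst Tm.var = A := by
  have : (Tm.subst Tm.var : Tm L → Tm L) = id := funext Tm.subst_id
  simp [NAtom.subst, this]

theorem NCon.rename_rename (f g : L.Name → L.Name) (C : NCon L) :
    (C.rename f).rename g = C.rename (g ∘ f) := by
  induction C <;> simp [NCon.rename, Tm.rename_rename, NAtom.rename_rename, *]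

theorem NCon.rename_subst (f : L.Name → L.Name) (C : NCon L) :
    ∀ θ : ℕ → Tm L, (C.subst θ).rename f = (C.rename f).subst (fun X => (θ X).rename f) := by
  induction C with
  | ex X σ C ih =>
    intro θ
    simp only [NCon.subst, NCon.rename, ih]
    congr 2
    funext Y
    by_cases h : Y = X
    · subst h; simp
    · simp [h]
  | _ => intro θ; simp [NCon.subst, NCon.rename, Tm.rename_subst, NAtom.rename_subst, *]

theorem NCon.subst_id (C : NCon L) : C.subst Tm.var = C := by
  induction C with
  | ex X σ C ih => simp [NCon.subst, ih]
  | _ => simp [NCon.subst, Tm.subst_id, NAtom.subst_id, *]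

/-- Composition of substitutions. Substitution under `∃` does not rename bound variables, so the
values of `θ` have to be ground or trivial for this to hold. -/
theorem NCon.subst_subst (C : NCon L) : ∀ (θ ρ : ℕ → Tm L),
    (∀ Y, θ Y = Tm.var Y ∨ (θ Y).Ground) →
    (C.subst θ).subst ρ = C.subst (fun X => (θ X).subst ρ) := by
  induction C with
  | ex X σ C ih =>
    intro θ ρ hθ
    simp only [NCon.subst]
    rw [ih]
    · congr 2
      funext Y
      by_cases h : Y = X
      · subst h; simp
      · rcases hθ Y with hY | hY
        · simp [h, hY]
        · simp [h, hY _]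
    · intro Y
      by_cases h : Y = X
      · subst h; simp
      · simpa [h] using hθ Y
  | and C C' ih ih' => intro θ ρ hθ; simp [NCon.subst, ih θ ρ hθ, ih' θ ρ hθ]
  | nu a C ih => intro θ ρ hθ; simp [NCon.subst, ih θ ρ hθ]
  | _ => intro θ ρ hθ; simp [NCon.subst, Tm.subst_subst, NAtom.subst_subst]

theorem substSingle_ground {s : Tm L} (hs : s.Ground) (X : ℕ) (Y : ℕ) :
    substSingle X s Y = Tm.var Y ∨ (substSingle X s Y).Ground := by
  unfold substSingle
  split_ifs
  · exact Or.inr hs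
  · exact Or.inl rfl

/-- Replacing `X` by its ground value `s = θ X` may be postponed until after `θ` has been applied
to the other variables. The final instantiation on the right-hand side acts on the occurrences of
`X` that the other values of `θ` bring in. -/
theorem NCon.subst_update_single (X : ℕ) (s : Tm L) (hs : s.Ground) (C : NCon L) :
    ∀ θ : ℕ → Tm L, θ X = s →
    (C.subst (Function.update θ X (Tm.var X))).subst (substSingle X s) =
      (C.subst θ).subst (substSingle X s) := by
  have key : ∀ θ : ℕ → Tm L, θ X = s →
      (fun Y => (Function.update θ X (Tm.var X) Y).subst (substSingle X s)) =
        fun Y => (θ Y).subst (substSingle X s) := by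
    intro θ hθ
    funext Y
    by_cases h : Y = X
    · subst h; simp [hθ, hs _, substSingle]
    · simp [h]
  induction C with
  | ex Z σ C ih =>
    intro θ hθ
    by_cases h : Z = X
    · subst h; simp [NCon.subst]
    · have h₁ : Function.update (substSingle X s) Z (Tm.var Z) = substSingle X s := by
        rw [Function.update_eq_self_iff]; simp [substSingle, h]
      simp only [NCon.subst, h₁]
      rw [Function.update_comm (Ne.symm h), ih]
      simp [Ne.symm h, hθ]
  | and C C' ih ih' => intro θ hθ; simp [NCon.subst, ih θ hθ, ih' θ hθ]
  | nu a C ih => intro θ hθ; simp [NCon.subst, ih θ hθ]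
  | _ => intro θ hθ; simp [NCon.subst, Tm.subst_subst, NAtom.subst_subst, key θ hθ]

theorem NAtom.FNa.subst {a : L.Name} {A : NAtom L} (h : NAtom.FNa a A) (ρ : ℕ → Tm L) :
    NAtom.FNa a (A.subst ρ) := by
  obtain ⟨t, ht, h⟩ := h
  exact ⟨_, List.mem_map_of_mem ht, h.subst ρ⟩

theorem NAtom.FNa.rename {f : L.Name → L.Name} (hf : Function.Injective f) {a : L.Name}
    {A : NAtom L} (h : NAtom.FNa a A) : NAtom.FNa (f a) (A.rename f) := by
  obtain ⟨t, ht, h⟩ := h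
  exact ⟨_, List.mem_map_of_mem ht, h.rename hf⟩

theorem NCon.FNa.subst {a : L.Name} {C : NCon L} (h : NCon.FNa a C) :
    ∀ ρ : ℕ → Tm L, NCon.FNa a (C.subst ρ) := by
  induction h with
  | eq₁ t u h => exact fun ρ => .eq₁ _ _ _ (h.subst ρ)
  | eq₂ t u h => exact fun ρ => .eq₂ _ _ _ (h.subst ρ)
  | frN t => exact fun ρ => .frN _ _
  | frT c t h => exact fun ρ => .frT _ _ _ (h.subst ρ)
  | sim₁ t u h => exact fun ρ => .sim₁ _ _ _ (h.subst ρ)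
  | sim₂ t u h => exact fun ρ => .sim₂ _ _ _ (h.subst ρ)
  | simA₁ A B h => exact fun ρ => .simA₁ _ _ _ (h.subst ρ)
  | simA₂ A B h => exact fun ρ => .simA₂ _ _ _ (h.subst ρ)
  | aeqA₁ A B h => exact fun ρ => .aeqA₁ _ _ _ (h.subst ρ)
  | aeqA₂ A B h => exact fun ρ => .aeqA₂ _ _ _ (h.subst ρ)
  | and₁ C C' _ ih => exact fun ρ => .and₁ _ _ _ (ih ρ)
  | and₂ C C' _ ih => exact fun ρ => .and₂ _ _ _ (ih ρ)
  | ex X σ C _ ih => exact fun ρ => .ex _ _ _ _ (ih _)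
  | nu c C hac _ ih => exact fun ρ => .nu _ _ _ hac (ih ρ)

theorem NCon.FNa.rename {f : L.Name → L.Name} (hf : Function.Injective f) {a : L.Name}
    {C : NCon L} (h : NCon.FNa a C) : NCon.FNa (f a) (C.rename f) := by
  induction h with
  | eq₁ t u h => exact .eq₁ _ _ _ (h.rename hf)
  | eq₂ t u h => exact .eq₂ _ _ _ (h.rename hf)
  | frN t => exact .frN _ _
  | frT c t h => exact .frT _ _ _ (h.rename hf)
  | sim₁ t u h => exact .sim₁ _ _ _ (h.rename hf)
  | sim₂ t u h => exact .sim₂ _ _ _ (h.rename hf)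
  | simA₁ A B h => exact .simA₁ _ _ _ (h.rename hf)
  | simA₂ A B h => exact .simA₂ _ _ _ (h.rename hf)
  | aeqA₁ A B h => exact .aeqA₁ _ _ _ (h.rename hf)
  | aeqA₂ A B h => exact .aeqA₂ _ _ _ (h.rename hf)
  | and₁ C C' _ ih => exact .and₁ _ _ _ ih
  | and₂ C C' _ ih => exact .and₂ _ _ _ ih
  | ex X σ C _ ih => exact .ex _ _ _ _ ih
  | nu c C hac _ ih => exact .nu _ _ _ (fun h => hac (hf h)) ih

/-! ### Two closure properties of satisfaction -/

theorem substSingle_rename (f : L.Name → L.Name) (X : ℕ) (t : Tm L) :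
    (fun Y => (substSingle X t Y).rename f) = substSingle X (t.rename f) := by
  funext Y
  unfold substSingle
  split_ifs <;> simp

/-- Satisfaction is equivariant. -/
theorem ConSat.swap {p q : L.Name} (hpq : p.1 = q.1) {C : NCon L} (h : ConSat C) :
    ConSat (C.swap p q) := by
  induction hn : C.size using Nat.strong_induction_on generalizing C with
  | _ n ihn =>
  subst hn
  have hinj := swapName_inj p q
  cases C with
  | tt => simpa [NCon.swap, NCon.rename] using h
  | eq t u =>
    simp only [NCon.swap, NCon.rename, ConSat] at h ⊢
    exact h.rename hinj
  | fr a t =>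
    simp only [NCon.swap, NCon.rename, ConSat] at h ⊢
    exact h.rename hinj
  | sim t u =>
    simp only [NCon.swap, NCon.rename, ConSat] at h ⊢
    exact h.swapName hpq
  | simA A B =>
    simp only [NCon.swap, NCon.rename, ConSat] at h ⊢
    exact h.swapName hpq
  | aeqA A B =>
    simp only [NCon.swap, NCon.rename, ConSat] at h ⊢
    exact h.rename hinj
  | and C C' =>
    simp only [NCon.swap, NCon.rename, ConSat] at h ⊢
    exact ⟨ihn _ (by simp [NCon.size]) h.1 rfl, ihn _ (by simp [NCon.size]) h.2 rfl⟩
  | ex X σ C =>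
    simp only [NCon.swap, NCon.rename, ConSat] at h ⊢
    obtain ⟨t, ht, h⟩ := h
    refine ⟨t.rename (swapName p q), ht.rename (swapName_sort hpq), ?_⟩
    rw [← substSingle_rename, ← NCon.rename_subst]
    exact ihn _ (by simp [NCon.size]) h rfl
  | nu a C =>
    simp only [NCon.swap, NCon.rename, ConSat] at h ⊢
    intro b hb hfn
    -- `b` is the image of the name `swapName p q b`, to which the hypothesis applies.
    have h' := h (swapName p q b) (by rw [swapName_sort hpq, hb, swapName_sort hpq]) (by
      intro hfn'
      apply hfn
      have := hfn'.rename hinj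
      rwa [swapName_invol] at this)
    have h'' := ihn _ (by simp [NCon.size]) h' rfl
    simp only [NCon.swap] at h'' ⊢
    rwa [NCon.rename_rename, swapName_comm hinj, swapName_invol,
      ← NCon.rename_rename] at h''

/-- Satisfaction survives the instantiation of a variable left free in the constraint: variables
never contribute to the truth of an atomic constraint. -/
theorem ConSat.subst_single {X : ℕ} {s : Tm L} (hs : s.Ground) {C : NCon L} (h : ConSat C) :
    ConSat (C.subst (substSingle X s)) := by
  induction hn : C.size using Nat.strong_induction_on generalizing C s with
  | _ n ihn =>
  subst hn
  cases C with
  | tt => simpa [NCon.subst] using h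
  | eq t u =>
    simp only [NCon.subst, ConSat] at h ⊢
    exact h.subst _
  | fr a t =>
    simp only [NCon.subst, ConSat] at h ⊢
    exact h.subst _
  | sim t u =>
    simp only [NCon.subst, ConSat] at h ⊢
    exact h.subst _
  | simA A B =>
    simp only [NCon.subst, ConSat] at h ⊢
    exact h.subst _
  | aeqA A B =>
    simp only [NCon.subst, ConSat] at h ⊢
    exact h.subst _
  | and C C' =>
    simp only [NCon.subst, ConSat] at h ⊢
    exact ⟨ihn _ (by simp [NCon.size]) hs h.1 rfl,
      ihn _ (by simp [NCon.size]) hs h.2 rfl⟩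
  | ex Z σ C =>
    simp only [NCon.subst, ConSat] at h ⊢
    obtain ⟨t, ht, h⟩ := h
    refine ⟨t, ht, ?_⟩
    by_cases hZ : Z = X
    -- If the binder shadows `X`, the substitution acts as the identity below it.
    · subst hZ
      have : Function.update (substSingle Z s) Z (Tm.var Z) = Tm.var := by
        funext Y
        by_cases hY : Y = Z
        · subst hY; simp
        · simp [substSingle, hY]
      rwa [this, NCon.subst_id]
    · have h₁ : Function.update (substSingle X s) Z (Tm.var Z) = substSingle X s := by
        rw [Function.update_eq_self_iff]; simp [substSingle, hZ]
      have h₂ := ihn _ (by simp [NCon.size]) hs h rfl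
      rw [NCon.subst_subst _ _ _ (substSingle_ground ht.ground Z)] at h₂
      rw [h₁, NCon.subst_subst _ _ _ (substSingle_ground hs X)]
      convert h₂ using 2
      funext Y
      by_cases hY : Y = X
      · subst hY; simp [substSingle, Ne.symm hZ, hs _]
      · by_cases hYZ : Y = Z
        · subst hYZ; simp [substSingle, hY, ht.ground _]
        · simp [substSingle, hY, hYZ]
  | nu a C =>
    simp only [NCon.subst, ConSat] at h ⊢
    intro b hb hfn
    have h₁ := h b hb (fun hfn' => hfn (hfn'.subst (substSingle X s)))
    rw [NCon.swap, NCon.rename_subst, substSingle_rename]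
    exact ihn _ (by simp [NCon.size]) (hs.rename_swapName b a) h₁ rfl

/-- If `θ X` is a witness of the right sort, then `θ` satisfies `∃X:σ.C` when it satisfies `C`,
even if `θ` leaves free variables in the remaining values. -/
theorem ConSat.ex_intro {X : ℕ} {σ : NomSort L.NSort L.DSort} {C : NCon L} {θ : ℕ → Tm L}
    (hX : IsTm (θ X) σ) (h : ConSat (C.subst θ)) : ConSat ((NCon.ex X σ C).subst θ) := by
  simp only [NCon.subst, ConSat]
  refine ⟨θ X, hX, ?_⟩
  rw [NCon.subst_update_single X (θ X) hX.ground C θ rfl]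
  exact h.subst_single hX.ground

/-- By equivariance, a constraint satisfied at `a` itself is satisfied at every name of the
same sort. -/
theorem ConSat.nu_intro {a : L.Name} {C : NCon L} {θ : ℕ → Tm L}
    (h : ConSat (C.subst θ)) : ConSat ((NCon.nu a C).subst θ) := by
  simp only [NCon.subst, ConSat]
  intro b hb _
  exact h.swap hb

/-! ### Residuated derivations and operational transitions -/

/-- No rule of the residuated system inspects the context, so it may be replaced by any other. -/
theorem RF.change_ctx {Δ : Set (NCl L)} {Ξ : Ctxx L} {D : NCl L} {A : NAtom L} {G : NGoal L}
    (h : RF Δ Ξ D A G) : ∀ Ξ' : Ctxx L, RF Δ Ξ' D A G := by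
  refine RF.rec (motive_1 := fun _ _ _ _ => True)
    (motive_2 := fun _ D A G _ => ∀ Ξ' : Ctxx L, RF Δ Ξ' D A G)
    ?_ ?_ ?_ ?_ ?_ ?_ ?_ ?_ ?_ ?_ ?_ ?_ ?_ ?_ h
  any_goals (intros; trivial)
  · exact fun _ A' A Ξ' => .hyp _ _ _
  · exact fun _ _ _ _ _ _ ih Ξ' => .andL₁ _ _ _ _ _ (ih Ξ')
  · exact fun _ _ _ _ _ _ ih Ξ' => .andL₂ _ _ _ _ _ (ih Ξ')
  · exact fun _ _ _ _ _ _ ih Ξ' => .impL _ _ _ _ _ (ih Ξ')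
  · exact fun _ _ _ _ _ _ _ ih Ξ' => .allL _ _ _ _ _ _ (ih _)
  · exact fun _ _ _ _ _ _ ih Ξ' => .nuL _ _ _ _ _ (ih _)

theorem RG.change_ctx {Δ : Set (NCl L)} {Ξ : Ctxx L} {G : NGoal L} {C : NCon L}
    (h : RG Δ Ξ G C) : ∀ Ξ' : Ctxx L, RG Δ Ξ' G C := by
  refine RG.rec (motive_1 := fun _ G C _ => ∀ Ξ' : Ctxx L, RG Δ Ξ' G C)
    (motive_2 := fun _ _ _ _ _ => True)
    ?_ ?_ ?_ ?_ ?_ ?_ ?_ ?_ ?_ ?_ ?_ ?_ ?_ ?_ h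
  any_goals (intros; trivial)
  · exact fun _ _ Ξ' => .con _ _
  · exact fun _ Ξ' => .top _
  · exact fun _ _ _ _ _ _ _ ih ih' Ξ' => .andR _ _ _ _ _ (ih Ξ') (ih' Ξ')
  · exact fun _ _ _ _ _ ih Ξ' => .orR₁ _ _ _ _ (ih Ξ')
  · exact fun _ _ _ _ _ ih Ξ' => .orR₂ _ _ _ _ (ih Ξ')
  · exact fun _ _ _ _ _ _ ih Ξ' => .exR _ _ _ _ _ (ih _)
  · exact fun _ _ _ _ _ ih Ξ' => .nuR _ _ _ _ (ih _)
  · exact fun _ _ _ _ _ hD hF _ _ ih Ξ' => .back _ _ _ _ _ hD (hF.change_ctx Ξ') (ih Ξ')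

/-- Residual constraints for the goals of a state that hold, together with the constraints and
the context of that state, under every solution of the constraints `Φ'` in the context `Ξ'` of
a final state. -/
def Sound (Δ : Set (NCl L)) (Ξ' : Ctxx L) (Φ' : Finset (NCon L)) (s : OState L) : Prop :=
  ∃ Cs : List (NCon L), List.Forall₂ (RG Δ s.ctx) s.goals Cs ∧
    ∀ θ : ℕ → Tm L, SubstOk Ξ' θ → (∀ E ∈ Φ', ConSat (E.subst θ)) →
      SubstOk s.ctx θ ∧ (∀ E ∈ s.cons, ConSat (E.subst θ)) ∧ ∀ E ∈ Cs, ConSat (E.subst θ)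

theorem OStep.sound {Δ : Set (NCl L)} {Ξ' : Ctxx L} {Φ' : Finset (NCon L)} {s s' : OState L}
    (h : OStep Δ s s') (hs : Sound Δ Ξ' Φ' s') : Sound Δ Ξ' Φ' s := by
  obtain ⟨Cs, hCs, hsat⟩ := hs
  cases h with
  | back Ξ Φ Γ D A G hD hF =>
    obtain ⟨C, Cs, hC, hCs', rfl⟩ := List.forall₂_cons_left_iff.1 hCs
    exact ⟨C :: Cs, .cons (.back _ _ _ _ _ hD hF hC) hCs', hsat⟩
  | con Ξ Φ Γ C _ =>
    refine ⟨C :: Cs, .cons (.con _ _) hCs, fun θ h₁ h₂ => ?_⟩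
    obtain ⟨h₃, h₄, h₅⟩ := hsat θ h₁ h₂
    simp only [Finset.mem_insert, forall_eq_or_imp] at h₄
    exact ⟨h₃, h₄.2, by simpa using ⟨h₄.1, h₅⟩⟩
  | top Ξ Φ Γ =>
    refine ⟨NCon.tt :: Cs, .cons (.top _) hCs, fun θ h₁ h₂ => ?_⟩
    obtain ⟨h₃, h₄, h₅⟩ := hsat θ h₁ h₂
    refine ⟨h₃, h₄, ?_⟩
    simpa [NCon.subst, ConSat] using h₅
  | and Ξ Φ Γ G₁ G₂ =>
    obtain ⟨C₁, Cs₁, hC₁, hCs₁, rfl⟩ := List.forall₂_cons_left_iff.1 hCs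
    obtain ⟨C₂, Cs, hC₂, hCs', rfl⟩ := List.forall₂_cons_left_iff.1 hCs₁
    refine ⟨NCon.and C₁ C₂ :: Cs, .cons (.andR _ _ _ _ _ hC₁ hC₂) hCs', fun θ h₁ h₂ => ?_⟩
    obtain ⟨h₃, h₄, h₅⟩ := hsat θ h₁ h₂
    refine ⟨h₃, h₄, ?_⟩
    simpa [NCon.subst, ConSat, and_assoc] using h₅
  | or₁ Ξ Φ Γ G₁ G₂ =>
    obtain ⟨C, Cs, hC, hCs', rfl⟩ := List.forall₂_cons_left_iff.1 hCs
    exact ⟨C :: Cs, .cons (.orR₁ _ _ _ _ hC) hCs', hsat⟩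
  | or₂ Ξ Φ Γ G₁ G₂ =>
    obtain ⟨C, Cs, hC, hCs', rfl⟩ := List.forall₂_cons_left_iff.1 hCs
    exact ⟨C :: Cs, .cons (.orR₂ _ _ _ _ hC) hCs', hsat⟩
  | ex Ξ Φ Γ X σ G =>
    obtain ⟨C, Cs, hC, hCs', rfl⟩ := List.forall₂_cons_left_iff.1 hCs
    refine ⟨NCon.ex X σ C :: Cs, .cons (.exR _ _ _ _ _ hC) (hCs'.imp fun _ _ h => h.change_ctx _),
      fun θ h₁ h₂ => ?_⟩
    obtain ⟨h₃, h₄, h₅⟩ := hsat θ h₁ h₂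
    simp only [List.mem_cons, forall_eq_or_imp] at h₅ ⊢
    exact ⟨h₃.2, h₄, ConSat.ex_intro h₃.1 h₅.1, h₅.2⟩
  | nu Ξ Φ Γ a G =>
    obtain ⟨C, Cs, hC, hCs', rfl⟩ := List.forall₂_cons_left_iff.1 hCs
    refine ⟨NCon.nu a C :: Cs, .cons (.nuR _ _ _ _ hC) (hCs'.imp fun _ _ h => h.change_ctx _),
      fun θ h₁ h₂ => ?_⟩
    obtain ⟨h₃, h₄, h₅⟩ := hsat θ h₁ h₂
    simp only [List.mem_cons, forall_eq_or_imp] at h₅ ⊢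
    exact ⟨h₃.2, h₄, ConSat.nu_intro h₅.1, h₅.2⟩

/-! **Statement 16.**  Operational soundness. -/
theorem stmt16 (L : NomSig)
    (hinhab : ∀ σ : NomSort L.NSort L.DSort, ∃ t : Tm L, IsTm t σ)
    (Δ : Set (NCl L)) (hfin : Δ.Finite) (hclv : ∀ D ∈ Δ, NCl.ClosedV D)
    (Ξ Ξ' : Ctxx L) (hΞ : CtxWF Ξ)
    (Gs : List (NGoal L)) (Φ Φ' : Finset (NCon L))
    (hsteps : Relation.ReflTransGen (OStep Δ) ⟨Ξ, Gs, Φ⟩ ⟨Ξ', [], Φ'⟩) :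
    ∃ Cs : List (NCon L),
      List.Forall₂ (RG Δ Ξ) Gs Cs ∧
      ∀ θ : ℕ → Tm L, SubstOk Ξ' θ → (∀ E ∈ Φ', ConSat (E.subst θ)) →
        (∀ E ∈ Φ, ConSat (E.subst θ)) ∧ ∀ E ∈ Cs, ConSat (E.subst θ) := by
  have key : Sound Δ Ξ' Φ' ⟨Ξ, Gs, Φ⟩ := by
    refine Relation.ReflTransGen.head_induction_on (motive := fun s _ => Sound Δ Ξ' Φ' s)
      hsteps ?_ (fun h _ ih => h.sound ih)
    exact ⟨[], .nil, fun θ h₁ h₂ => ⟨h₁, h₂, by simp⟩⟩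
  obtain ⟨Cs, hCs, h⟩ := key
  exact ⟨Cs, hCs, fun θ h₁ h₂ => (h θ h₁ h₂).2⟩

end
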